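/- The stabilizers S₃,…,S₆ can correct simultaneous bit errors on qutrits 0 and 6: for any a, b ∈ {1,2} and any logical codeword |ψ⟩ ∈ {|0_L⟩,|1_L⟩,|2_L⟩}, the doubly corrupted state X_a^(0) X_b^(6)|ψ⟩ is an eigenvector of each of S₃, S₄, S₅, S₆, with eigenvalue ≠ 1 for S₃ and for S₄, and eigenvalue 1 for S₅ and for S₆; moreover, no single bit error X_c^(j) (c ∈ {1,2}, j ∈ Fin 7) produces a syndrome in which exactly S₃ and S₄ have eigenvalue ≠ 1. -/

import Mathlib

open Complex Matrix

noncomputable section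

/-- ω = exp(2πi/3), a primitive cube root of unity. -/
def ω : ℂ := Complex.exp (2 * (Real.pi : ℂ) * Complex.I / 3)

/-- The ternary cyclic shift matrix: X₁ e_j = e_{(j+1) mod 3}. -/
def X1 : Matrix (Fin 3) (Fin 3) ℂ := Matrix.of fun i j => if i = j + 1 then (1 : ℂ) else 0

/-- The ternary phase matrix Z₁ = diag(1, ω, ω²). -/
def Z1 : Matrix (Fin 3) (Fin 3) ℂ := Matrix.diagonal ![1, ω, ω ^ 2]

/-- X₂ = X₁·X₁. -/
def X2 : Matrix (Fin 3) (Fin 3) ℂ := X1 * X1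

/-- Z₂ = Z₁·Z₁. -/
def Z2 : Matrix (Fin 3) (Fin 3) ℂ := Z1 * Z1

/-- The 7-qutrit state space. -/
abbrev V : Type := (Fin 7 → Fin 3) → ℂ

/-- Standard basis vector of the 7-qutrit state space indexed by a ternary string. -/
def e (s : Fin 7 → Fin 3) : V := fun t => if t = s then 1 else 0

/-- Action on the 7-qutrit space of a tensor product M₀ ⊗ M₁ ⊗ … ⊗ M₆ of 3×3 matrices. -/
def act (M : Fin 7 → Matrix (Fin 3) (Fin 3) ℂ) (v : V) : V :=
  fun s => ∑ t : Fin 7 → Fin 3, (∏ j : Fin 7, M j (s j) (t j)) * v t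

/-- `applyAt M j` applies the single-qutrit operator `M` at position `j` (identity elsewhere). -/
def applyAt (M : Matrix (Fin 3) (Fin 3) ℂ) (j : Fin 7) : V → V :=
  act (fun k => if k = j then M else 1)

/-- The unnormalized logical codeword |0_L⟩. -/
def c0 : V :=
  e ![0,0,0,0,0,0,0] + e ![1,0,2,0,1,0,2] + e ![2,0,1,0,2,0,1]
    + e ![0,1,0,2,0,1,0] + e ![1,1,2,2,1,1,2] + e ![2,1,1,2,2,1,1]
    + e ![0,2,0,1,0,2,0] + e ![1,2,2,1,1,2,2] + e ![2,2,1,1,2,2,1]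

/-- The unnormalized logical codeword |1_L⟩. -/
def c1 : V :=
  e ![1,1,1,1,1,1,1] + e ![2,1,0,1,2,1,0] + e ![0,1,2,1,0,1,2]
    + e ![1,2,1,0,1,2,1] + e ![2,2,0,0,2,2,0] + e ![0,2,2,0,0,2,2]
    + e ![1,0,1,2,1,0,1] + e ![2,0,0,2,2,0,0] + e ![0,0,2,2,0,0,2]

/-- The unnormalized logical codeword |2_L⟩. -/
def c2 : V :=
  e ![2,2,2,2,2,2,2] + e ![0,2,1,2,0,2,1] + e ![1,2,0,2,1,2,0]
    + e ![2,0,2,1,2,0,2] + e ![0,0,1,1,0,0,1] + e ![1,0,0,1,1,0,0]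
    + e ![2,1,2,0,2,1,2] + e ![0,1,1,0,0,1,1] + e ![1,1,0,0,1,1,0]

/-- The three logical codewords. -/
def cw : Fin 3 → V := ![c0, c1, c2]

/-- Phase-error stabilizer S₁ = X₁⊗I⊗X₂⊗I⊗X₁⊗I⊗X₂. -/
def S1 : V → V := act ![X1, 1, X2, 1, X1, 1, X2]

/-- Phase-error stabilizer S₂ = I⊗X₁⊗I⊗X₂⊗I⊗X₁⊗I. -/
def S2 : V → V := act ![1, X1, 1, X2, 1, X1, 1]

/-- Bit-error stabilizer S₃ = Z₁⊗Z₂⊗Z₁⊗Z₂⊗I⊗I⊗I. -/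
def S3 : V → V := act ![Z1, Z2, Z1, Z2, 1, 1, 1]

/-- Bit-error stabilizer S₄ = I⊗I⊗I⊗Z₁⊗Z₂⊗Z₁⊗Z₂. -/
def S4 : V → V := act ![1, 1, 1, Z1, Z2, Z1, Z2]

/-- Bit-error stabilizer S₅ = I⊗Z₁⊗Z₂⊗Z₁⊗Z₂⊗I⊗I. -/
def S5 : V → V := act ![1, Z1, Z2, Z1, Z2, 1, 1]

/-- Bit-error stabilizer S₆ = I⊗I⊗Z₁⊗Z₂⊗Z₁⊗Z₂⊗I. -/
def S6 : V → V := act ![1, 1, Z1, Z2, Z1, Z2, 1]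

/-- XP 0 = X₁, XP 1 = X₂ : the two ternary bit-error operators indexed by {1,2}. -/
def XP : Fin 2 → Matrix (Fin 3) (Fin 3) ℂ := ![X1, X2]

/-- The character `x ↦ ω ^ x` of ℤ/3. -/
def chi (x : Fin 3) : ℂ := ω ^ x.val

/-- Shift amounts of the two bit errors. -/
def pw : Fin 2 → Fin 3 := ![1, 2]

lemma omega_prim : IsPrimitiveRoot ω 3 := by
  have h := Complex.isPrimitiveRoot_exp 3 (by norm_num)
  simpa [ω] using h

lemma omega_cube : ω ^ 3 = 1 := omega_prim.pow_eq_one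

lemma chi_add (x y : Fin 3) : chi (x + y) = chi x * chi y := by
  unfold chi
  rw [Fin.val_add, ← pow_add]
  exact (pow_eq_pow_mod _ omega_cube).symm

lemma chi_eq_one {x : Fin 3} : chi x = 1 ↔ x = 0 := by
  unfold chi
  rw [omega_prim.pow_eq_one_iff_dvd]
  revert x; decide

lemma act_mono (M : Fin 7 → Matrix (Fin 3) (Fin 3) ℂ) (f : Fin 7 → Fin 3 → Fin 3)
    (g : Fin 7 → Fin 3 → ℂ) (h : ∀ j i k, M j i k = if k = f j i then g j i else 0)
    (v : V) (s : Fin 7 → Fin 3) :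
    act M v s = (∏ j, g j (s j)) * v (fun j => f j (s j)) := by
  unfold act
  rw [Finset.sum_eq_single (fun j => f j (s j))]
  · simp [h]
  · intro t _ ht
    obtain ⟨j, hj⟩ := Function.ne_iff.mp ht
    rw [Finset.prod_eq_zero (Finset.mem_univ j), zero_mul]
    rw [h, if_neg hj]
  · simp

lemma Z1_apply (i k : Fin 3) : Z1 i k = if k = i then chi i else 0 := by
  fin_cases i <;> fin_cases k <;> simp [Z1, chi]

lemma Z2_apply (i k : Fin 3) : Z2 i k = if k = i then chi i * chi i else 0 := by
  fin_cases i <;> fin_cases k <;> simp [Z2, Z1, chi]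

lemma one_apply' (i k : Fin 3) : (1 : Matrix (Fin 3) (Fin 3) ℂ) i k = if k = i then 1 else 0 := by
  simp [Matrix.one_apply, eq_comm]

lemma XP_apply (c : Fin 2) (i k : Fin 3) : XP c i k = if k = i - pw c then 1 else 0 := by
  fin_cases c <;> fin_cases i <;> fin_cases k <;>
    simp [XP, X1, X2, pw, Matrix.mul_apply] <;> decide

lemma applyAt_XP (c : Fin 2) (j : Fin 7) (v : V) (s : Fin 7 → Fin 3) :
    applyAt (XP c) j v s = v (Function.update s j (s j - pw c)) := by
  unfold applyAt
  rw [act_mono _ (fun k x => if k = j then x - pw c else x) (fun _ _ => 1)]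
  · rw [Finset.prod_const_one, one_mul]
    congr 1
    funext k
    by_cases hk : k = j
    · subst hk; simp
    · simp [hk]
  · intro k x y
    by_cases hk : k = j
    · simp [hk, XP_apply]
    · simp [hk, one_apply']

/-- Syndromes. -/
def h3 (s : Fin 7 → Fin 3) : Fin 3 := s 0 + (s 1 + s 1) + s 2 + (s 3 + s 3)
/-- Syndrome of the fourth stabilizer. -/
def h4 (s : Fin 7 → Fin 3) : Fin 3 := s 3 + (s 4 + s 4) + s 5 + (s 6 + s 6)
/-- Syndrome of the fifth stabilizer. -/
def h5 (s : Fin 7 → Fin 3) : Fin 3 := s 1 + (s 2 + s 2) + s 3 + (s 4 + s 4)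
/-- Syndrome of the sixth stabilizer. -/
def h6 (s : Fin 7 → Fin 3) : Fin 3 := s 2 + (s 3 + s 3) + s 4 + (s 5 + s 5)

lemma S3_apply (v : V) (s : Fin 7 → Fin 3) : S3 v s = chi (h3 s) * v s := by
  unfold S3
  rw [act_mono _ (fun _ x => x) ![chi, fun x => chi x * chi x, chi, fun x => chi x * chi x,
    fun _ => 1, fun _ => 1, fun _ => 1]]
  · rw [Fin.prod_univ_seven]
    change chi (s 0) * (chi (s 1) * chi (s 1)) * chi (s 2) * (chi (s 3) * chi (s 3)) * 1 * 1 * 1 * v s = _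
    simp only [h3, chi_add, one_mul, mul_one]
  · intro j i k
    fin_cases j <;> first | exact one_apply' i k | exact Z1_apply i k | exact Z2_apply i k

lemma S4_apply (v : V) (s : Fin 7 → Fin 3) : S4 v s = chi (h4 s) * v s := by
  unfold S4
  rw [act_mono _ (fun _ x => x) ![fun _ => 1, fun _ => 1, fun _ => 1,
    chi, fun x => chi x * chi x, chi, fun x => chi x * chi x]]
  · rw [Fin.prod_univ_seven]
    change 1 * 1 * 1 * chi (s 3) * (chi (s 4) * chi (s 4)) * chi (s 5) * (chi (s 6) * chi (s 6)) * v s = _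
    simp only [h4, chi_add, one_mul, mul_one]
  · intro j i k
    fin_cases j <;> first | exact one_apply' i k | exact Z1_apply i k | exact Z2_apply i k

lemma S5_apply (v : V) (s : Fin 7 → Fin 3) : S5 v s = chi (h5 s) * v s := by
  unfold S5
  rw [act_mono _ (fun _ x => x) ![fun _ => 1, chi, fun x => chi x * chi x, chi,
    fun x => chi x * chi x, fun _ => 1, fun _ => 1]]
  · rw [Fin.prod_univ_seven]
    change 1 * chi (s 1) * (chi (s 2) * chi (s 2)) * chi (s 3) * (chi (s 4) * chi (s 4)) * 1 * 1 * v s = _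
    simp only [h5, chi_add, one_mul, mul_one]
  · intro j i k
    fin_cases j <;> first | exact one_apply' i k | exact Z1_apply i k | exact Z2_apply i k

lemma S6_apply (v : V) (s : Fin 7 → Fin 3) : S6 v s = chi (h6 s) * v s := by
  unfold S6
  rw [act_mono _ (fun _ x => x) ![fun _ => 1, fun _ => 1, chi, fun x => chi x * chi x, chi,
    fun x => chi x * chi x, fun _ => 1]]
  · rw [Fin.prod_univ_seven]
    change 1 * 1 * chi (s 2) * (chi (s 3) * chi (s 3)) * chi (s 4) * (chi (s 5) * chi (s 5)) * 1 * v s = _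
    simp only [h6, chi_add, one_mul, mul_one]
  · intro j i k
    fin_cases j <;> first | exact one_apply' i k | exact Z1_apply i k | exact Z2_apply i k

/-- Strings with trivial syndrome. -/
def Good (t : Fin 7 → Fin 3) : Prop := h3 t = 0 ∧ h4 t = 0 ∧ h5 t = 0 ∧ h6 t = 0

/-- Vectors supported on strings with trivial syndrome. -/
def Supp (v : V) : Prop := ∀ t, v t ≠ 0 → Good t

lemma supp_add {v w : V} (hv : Supp v) (hw : Supp w) : Supp (v + w) := by
  intro t ht
  by_cases h : v t = 0
  · refine hw t fun h' => ht ?_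
    simp [h, h']
  · exact hv t h

lemma supp_e {s : Fin 7 → Fin 3} (hs : Good s) : Supp (e s) := by
  intro t ht
  by_cases h : t = s
  · rwa [h]
  · simp [e, h] at ht

lemma supp_cw (i : Fin 3) : Supp (cw i) := by
  fin_cases i
  · show Supp c0
    unfold c0
    repeat' apply supp_add
    all_goals exact supp_e (by unfold Good; decide)
  · show Supp c1
    unfold c1
    repeat' apply supp_add
    all_goals exact supp_e (by unfold Good; decide)
  · show Supp c2
    unfold c2
    repeat' apply supp_add
    all_goals exact supp_e (by unfold Good; decide)

lemma c0_zero : cw 0 (fun _ => 0) = 1 := by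
  have h : ∀ s : Fin 7 → Fin 3, e s (fun _ => 0) = if (∀ j, 0 = s j) then 1 else 0 := by
    intro s; simp [e, funext_iff]
  show c0 _ = 1
  simp [c0, h, Fin.forall_fin_succ]

open Fin.CommRing in
lemma double_error (a b : Fin 2) (s : Fin 7 → Fin 3)
    (h : Good (Function.update (Function.update s 0 (s 0 - pw a)) 6 (s 6 - pw b))) :
    h3 s = pw a ∧ h4 s = pw b + pw b ∧ h5 s = 0 ∧ h6 s = 0 := by
  simp only [Good, h3, h4, h5, h6, Function.update_apply, Fin.reduceEq, if_true, if_false] at h ⊢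
  obtain ⟨p3, p4, p5, p6⟩ := h
  refine ⟨?_, ?_, p5, p6⟩
  · linear_combination p3
  · linear_combination p4

lemma single_error : ∀ (c : Fin 2) (j : Fin 7),
    h5 (Function.update (fun _ => 0) j (pw c)) = 0 →
    h6 (Function.update (fun _ => 0) j (pw c)) = 0 →
    h3 (Function.update (fun _ => 0) j (pw c)) ≠ 0 →
    h4 (Function.update (fun _ => 0) j (pw c)) ≠ 0 → False := by
  decide

/-- The stabilizers S₃,…,S₆ correct simultaneous bit errors on qutrits 0 and 6:
X_a^(0) X_b^(6)|ψ⟩ is an eigenvector of each of S₃,…,S₆ with eigenvalue ≠ 1 for S₃ and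
S₄ and eigenvalue 1 for S₅ and S₆; and no single bit error produces a syndrome in which
exactly S₃ and S₄ have eigenvalue ≠ 1. -/
theorem simultaneous_bit_errors_q0_q6 :
    (∀ a b : Fin 2, ∀ i : Fin 3,
      ∃ l3 l4 : ℂ, l3 ≠ 1 ∧ l4 ≠ 1 ∧
        S3 (applyAt (XP a) 0 (applyAt (XP b) 6 (cw i))) =
          l3 • applyAt (XP a) 0 (applyAt (XP b) 6 (cw i)) ∧
        S4 (applyAt (XP a) 0 (applyAt (XP b) 6 (cw i))) =
          l4 • applyAt (XP a) 0 (applyAt (XP b) 6 (cw i)) ∧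
        S5 (applyAt (XP a) 0 (applyAt (XP b) 6 (cw i))) =
          applyAt (XP a) 0 (applyAt (XP b) 6 (cw i)) ∧
        S6 (applyAt (XP a) 0 (applyAt (XP b) 6 (cw i))) =
          applyAt (XP a) 0 (applyAt (XP b) 6 (cw i))) ∧
    ¬ ∃ (c : Fin 2) (j : Fin 7) (l3 l4 : ℂ), l3 ≠ 1 ∧ l4 ≠ 1 ∧
        ∀ i : Fin 3,
          S3 (applyAt (XP c) j (cw i)) = l3 • applyAt (XP c) j (cw i) ∧
          S4 (applyAt (XP c) j (cw i)) = l4 • applyAt (XP c) j (cw i) ∧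
          S5 (applyAt (XP c) j (cw i)) = applyAt (XP c) j (cw i) ∧
          S6 (applyAt (XP c) j (cw i)) = applyAt (XP c) j (cw i) := by
  constructor
  · intro a b i
    have key : ∀ s, applyAt (XP a) 0 (applyAt (XP b) 6 (cw i)) s = 0 ∨
        (h3 s = pw a ∧ h4 s = pw b + pw b ∧ h5 s = 0 ∧ h6 s = 0) := by
      intro s
      by_cases h : applyAt (XP a) 0 (applyAt (XP b) 6 (cw i)) s = 0
      · exact Or.inl h
      · right
        rw [applyAt_XP, applyAt_XP] at h
        have := supp_cw i _ h
        exact double_error a b s (by simpa using this)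
    have hz : chi 0 = 1 := chi_eq_one.mpr rfl
    refine ⟨chi (pw a), chi (pw b + pw b), ?_, ?_, ?_, ?_, ?_, ?_⟩
    · rw [Ne, chi_eq_one]; clear key; revert a; decide
    · rw [Ne, chi_eq_one]; clear key; revert b; decide
    · funext s
      rw [S3_apply, Pi.smul_apply, smul_eq_mul]
      rcases key s with h | ⟨k3, k4, k5, k6⟩
      · rw [h, mul_zero, mul_zero]
      · rw [k3]
    · funext s
      rw [S4_apply, Pi.smul_apply, smul_eq_mul]
      rcases key s with h | ⟨k3, k4, k5, k6⟩
      · rw [h, mul_zero, mul_zero]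
      · rw [k4]
    · funext s
      rw [S5_apply]
      rcases key s with h | ⟨k3, k4, k5, k6⟩
      · rw [h, mul_zero]
      · rw [k5, hz, one_mul]
    · funext s
      rw [S6_apply]
      rcases key s with h | ⟨k3, k4, k5, k6⟩
      · rw [h, mul_zero]
      · rw [k6, hz, one_mul]
  · rintro ⟨c, j, l3, l4, n3, n4, H⟩
    obtain ⟨e3, e4, e5, e6⟩ := H 0
    have hv : applyAt (XP c) j (cw 0) (Function.update (fun _ => 0) j (pw c)) = 1 := by
      rw [applyAt_XP, ← c0_zero]
      congr 1
      simp
    have q3 := congrFun e3 (Function.update (fun _ => 0) j (pw c))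
    have q4 := congrFun e4 (Function.update (fun _ => 0) j (pw c))
    have q5 := congrFun e5 (Function.update (fun _ => 0) j (pw c))
    have q6 := congrFun e6 (Function.update (fun _ => 0) j (pw c))
    rw [S3_apply, Pi.smul_apply, smul_eq_mul, hv, mul_one, mul_one] at q3
    rw [S4_apply, Pi.smul_apply, smul_eq_mul, hv, mul_one, mul_one] at q4
    rw [S5_apply, hv, mul_one] at q5
    rw [S6_apply, hv, mul_one] at q6
    refine single_error c j (chi_eq_one.mp q5) (chi_eq_one.mp q6) ?_ ?_
    · intro h
      exact n3 (q3 ▸ chi_eq_one.mpr h)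
    · intro h
      exact n4 (q4 ▸ chi_eq_one.mpr h)
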